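/- The space (ℝ², d*) is an M-space: for all x, y ∈ ℝ², writing λ = d*(x,y), and for every r ∈ [0, λ], there exists a unique point z ∈ ℝ² such that d*(x,z) = r and d*(z,y) = λ − r. -/

import Mathlib

/-!
A point through which every path from `x` to `y` passes cuts the segment from `x` to `y` in two, and
it suffices to divide each part uniquely. If `x` and `y` lie on different vertical lines, their feet
on the river are such points, which leaves segments inside one vertical line or inside the river.
These are isometric copies of `ℝ` that contain every point between two of their points, and in `ℝ`,
as in every strictly convex space, segments are divided uniquely.
-/

/-- The river metric on ℝ². -/
noncomputable def riverDist (u v : ℝ × ℝ) : ℝ :=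
  if u.1 = v.1 then |u.2 - v.2| else |u.2| + |v.2| + |u.1 - v.1|

/-- The metric segment between two points of ℝ² with the river metric. -/
def riverSegment (u v : ℝ × ℝ) : Set (ℝ × ℝ) :=
  {z | riverDist u z + riverDist z v = riverDist u v}

/-- A set is convex (w.r.t. the river metric) if it contains all metric segments
between its points. -/
def IsRiverConvex (K : Set (ℝ × ℝ)) : Prop :=
  ∀ u ∈ K, ∀ v ∈ K, riverSegment u v ⊆ K

/-- `m` is a midpoint of `u` and `v` for the river metric. -/
def IsRiverMidpoint (u v m : ℝ × ℝ) : Prop :=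
  riverDist u m = riverDist u v / 2 ∧ riverDist m v = riverDist u v / 2

section PseudoMetric

variable {X Y : Type*} [PseudoMetricSpace X] [PseudoMetricSpace Y] {w x y z : X} {r : ℝ}

/-- `z` lies on the metric segment from `x` to `y`, at distance `r` from `x`. -/
def IsDivisionPoint (x y : X) (r : ℝ) (z : X) : Prop :=
  dist x z = r ∧ dist z y = dist x y - r

/-- The condition defining M-spaces, for a single pair of points: the metric segment from `x` to
`y` has exactly one point at each distance `r ∈ [0, dist x y]` from `x`. -/
def HasUniqueDivision (x y : X) : Prop :=
  ∀ r, 0 ≤ r → r ≤ dist x y → ∃! z, IsDivisionPoint x y r z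

/-- The metric form of `w` being a cut point between `x` and `y`: each point `z` is beyond `w`
either as seen from `x` or as seen from `y`. -/
def MetricallySeparates (w x y : X) : Prop :=
  ∀ z, dist x w + dist w z = dist x z ∨ dist z w + dist w y = dist z y

theorem isDivisionPoint_comm :
    IsDivisionPoint x y r z ↔ IsDivisionPoint y x (dist x y - r) z := by
  simp only [IsDivisionPoint, dist_comm y, dist_comm z x, sub_sub_cancel]
  exact and_comm

theorem IsDivisionPoint.dist_add_dist (h : IsDivisionPoint x y r z) :
    dist x z + dist z y = dist x y := by
  rw [h.1, h.2, add_sub_cancel]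

theorem HasUniqueDivision.symm (h : HasUniqueDivision x y) : HasUniqueDivision y x := by
  intro r hr₀ hr
  rw [dist_comm] at hr
  simp only [isDivisionPoint_comm (x := y), dist_comm y x]
  exact h _ (sub_nonneg.2 hr) (sub_le_self _ hr₀)

theorem MetricallySeparates.symm (h : MetricallySeparates w x y) :
    MetricallySeparates w y x := by
  intro z
  simpa only [dist_comm, add_comm] using (h z).symm

theorem MetricallySeparates.dist_add_dist (h : MetricallySeparates w x y) :
    dist x w + dist w y = dist x y := by
  rcases h y with hx | hy
  · exact hx
  · rw [dist_self, dist_comm y w] at hy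
    linarith [dist_triangle x w y, dist_triangle_right x w y]

theorem MetricallySeparates.isDivisionPoint_iff (h : MetricallySeparates w x y)
    (hr : r ≤ dist x w) : IsDivisionPoint x y r z ↔ IsDivisionPoint x w r z := by
  have hxy := h.dist_add_dist
  refine and_congr_right fun hxz ↦ ⟨fun hzy ↦ ?_, fun hzw ↦ ?_⟩
  · rcases h z with hz | hz
    · have hwz : dist w z = 0 := le_antisymm (by linarith) dist_nonneg
      linarith [dist_comm w z]
    · linarith
  · linarith [dist_triangle z w y, dist_triangle x z y]

theorem HasUniqueDivision.trans (hxw : HasUniqueDivision x w) (hwy : HasUniqueDivision w y)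
    (h : MetricallySeparates w x y) : HasUniqueDivision x y := by
  intro r hr₀ hr
  have hxy := h.dist_add_dist
  rcases le_total r (dist x w) with hrw | hrw
  · simpa only [h.isDivisionPoint_iff hrw] using hxw r hr₀ hrw
  · have hrw' : dist x y - r ≤ dist y w := by linarith [dist_comm w y]
    simp only [isDivisionPoint_comm (x := x), h.symm.isDivisionPoint_iff hrw']
    exact hwy.symm _ (sub_nonneg.2 hr) hrw'

theorem isDivisionPoint_map_iff {f : X → Y} (hf : Isometry f) :
    IsDivisionPoint (f x) (f y) r (f z) ↔ IsDivisionPoint x y r z := by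
  simp only [IsDivisionPoint, hf.dist_eq]

theorem HasUniqueDivision.map {f : X → Y} (h : HasUniqueDivision x y) (hf : Isometry f)
    (hrange : ∀ z, dist (f x) z + dist z (f y) = dist (f x) (f y) → z ∈ Set.range f) :
    HasUniqueDivision (f x) (f y) := by
  intro r hr₀ hr
  rw [hf.dist_eq] at hr
  obtain ⟨t, ht, ht_unique⟩ := h r hr₀ hr
  refine ⟨f t, (isDivisionPoint_map_iff hf).2 ht, fun z hz ↦ ?_⟩
  obtain ⟨s, rfl⟩ := hrange z hz.dist_add_dist
  rw [ht_unique s ((isDivisionPoint_map_iff hf).1 hz)]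

end PseudoMetric

theorem hasUniqueDivision_of_strictConvexSpace {V P : Type*} [NormedAddCommGroup V]
    [NormedSpace ℝ V] [StrictConvexSpace ℝ V] [MetricSpace P] [NormedAddTorsor V P] (x y : P) :
    HasUniqueDivision x y := by
  intro r hr₀ hr
  let t := r / dist x y
  have hrt : r = t * dist x y :=
    (div_mul_cancel_of_imp fun hxy ↦ le_antisymm (hxy ▸ hr) hr₀).symm
  have ht₀ : 0 ≤ t := div_nonneg hr₀ dist_nonneg
  have ht₁ : 0 ≤ 1 - t := sub_nonneg.2 (div_le_one_of_le₀ hr dist_nonneg)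
  have hsub : dist x y - r = (1 - t) * dist x y := by rw [sub_mul, one_mul, ← hrt]
  refine ⟨AffineMap.lineMap x y t, ⟨?_, ?_⟩, fun z hz ↦ ?_⟩
  · rw [dist_left_lineMap, Real.norm_of_nonneg ht₀, hrt]
  · rw [dist_lineMap_right, Real.norm_of_nonneg ht₁, hsub]
  · exact eq_lineMap_of_dist_eq_mul_of_dist_eq_mul (hz.1.trans hrt) (hz.2.trans hsub)

theorem riverDist_self (u : ℝ × ℝ) : riverDist u u = 0 := by
  simp [riverDist]

theorem riverDist_comm (u v : ℝ × ℝ) : riverDist u v = riverDist v u := by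
  simp only [riverDist, eq_comm (a := u.1), abs_sub_comm u.1, abs_sub_comm u.2, add_comm |u.2|]

theorem abs_snd_sub_snd_le_riverDist (u v : ℝ × ℝ) : |u.2 - v.2| ≤ riverDist u v := by
  unfold riverDist
  split_ifs
  · exact le_rfl
  · linarith [abs_sub u.2 v.2, abs_nonneg (u.1 - v.1)]

theorem riverDist_triangle (u v w : ℝ × ℝ) :
    riverDist u w ≤ riverDist u v + riverDist v w := by
  by_cases huw : u.1 = w.1
  · rw [riverDist, if_pos huw]
    linarith [abs_sub_le u.2 v.2 w.2, abs_snd_sub_snd_le_riverDist u v,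
      abs_snd_sub_snd_le_riverDist v w]
  · have huv : |u.2| - |v.2| ≤ |u.2 - v.2| := abs_sub_abs_le_abs_sub u.2 v.2
    have hwv : |w.2| - |v.2| ≤ |v.2 - w.2| := abs_sub_comm v.2 w.2 ▸ abs_sub_abs_le_abs_sub w.2 v.2
    rw [riverDist, if_neg huw]
    by_cases hu : u.1 = v.1
    · have hw : v.1 ≠ w.1 := hu ▸ huw
      rw [riverDist, if_pos hu, riverDist, if_neg hw, hu]
      linarith
    · by_cases hw : v.1 = w.1
      · rw [riverDist, if_neg hu, riverDist, if_pos hw, hw]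
        linarith
      · rw [riverDist, if_neg hu, riverDist, if_neg hw]
        linarith [abs_sub_le u.1 v.1 w.1, abs_nonneg v.2]

theorem eq_of_riverDist_eq_zero {u v : ℝ × ℝ} (h : riverDist u v = 0) : u = v := by
  have hsnd : u.2 = v.2 := by
    rw [← sub_eq_zero, ← abs_nonpos_iff, ← h]
    exact abs_snd_sub_snd_le_riverDist u v
  refine Prod.ext ?_ hsnd
  by_contra hfst
  rw [riverDist, if_neg hfst] at h
  linarith [abs_nonneg u.2, abs_nonneg v.2, abs_sub_pos.2 hfst]

/-- The plane `ℝ²` with the river metric; a type synonym, as `ℝ × ℝ` carries the sup metric. -/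
def RiverPlane : Type := ℝ × ℝ

namespace RiverPlane

noncomputable instance : MetricSpace RiverPlane where
  dist := riverDist
  dist_self := riverDist_self
  dist_comm := riverDist_comm
  dist_triangle := riverDist_triangle
  eq_of_dist_eq_zero := eq_of_riverDist_eq_zero

/-- The point over `p` at height `a`. Thus `point p` parametrizes the vertical line over `p`, and
`(point · 0)` the river. -/
def point (p a : ℝ) : RiverPlane := (p, a)

theorem exists_eq_point (z : RiverPlane) : ∃ p a, z = point p a :=
  ⟨z.1, z.2, rfl⟩

variable {p q : ℝ}

theorem dist_point_same (p a b : ℝ) : dist (point p a) (point p b) = dist a b :=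
  if_pos rfl

theorem dist_point_of_ne (h : p ≠ q) (a b : ℝ) :
    dist (point p a) (point q b) = |a| + |b| + dist p q :=
  if_neg h

theorem isometry_point (p : ℝ) : Isometry (point p) :=
  Isometry.of_dist_eq (dist_point_same p)

theorem dist_point_zero (p q b : ℝ) : dist (point p 0) (point q b) = |b| + dist p q := by
  rcases eq_or_ne p q with rfl | h
  · rw [dist_point_same, dist_zero_left, Real.norm_eq_abs, dist_self, add_zero]
  · rw [dist_point_of_ne h, abs_zero, zero_add]

theorem isometry_point_zero : Isometry (point · 0) :=
  Isometry.of_dist_eq fun p q ↦ by rw [dist_point_zero, abs_zero, zero_add]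

theorem mem_range_point {a b : ℝ} {z : RiverPlane}
    (hz : dist (point p a) z + dist z (point p b) = dist (point p a) (point p b)) :
    z ∈ Set.range (point p) := by
  obtain ⟨q, c, rfl⟩ := exists_eq_point z
  rcases eq_or_ne p q with rfl | h
  · exact ⟨c, rfl⟩
  · rw [dist_point_of_ne h, dist_point_of_ne h.symm, dist_point_same, Real.dist_eq a b] at hz
    linarith [abs_sub a b, abs_nonneg c, dist_pos.2 h, dist_pos.2 h.symm]

theorem mem_range_point_zero {z : RiverPlane}
    (hz : dist (point p 0) z + dist z (point q 0) = dist (point p 0) (point q 0)) :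
    z ∈ Set.range (point · 0) := by
  obtain ⟨s, c, rfl⟩ := exists_eq_point z
  suffices hc : |c| ≤ 0 from ⟨s, by rw [abs_nonpos_iff.1 hc]⟩
  rw [dist_comm (point s c)] at hz
  simp only [dist_point_zero, abs_zero] at hz
  linarith [dist_triangle_right p q s]

theorem hasUniqueDivision_point_same (p a b : ℝ) :
    HasUniqueDivision (point p a) (point p b) :=
  (hasUniqueDivision_of_strictConvexSpace a b).map (isometry_point p) fun _ ↦ mem_range_point

theorem hasUniqueDivision_point_zero (p q : ℝ) :
    HasUniqueDivision (point p 0) (point q 0) :=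
  (hasUniqueDivision_of_strictConvexSpace p q).map isometry_point_zero
    fun _ ↦ mem_range_point_zero

theorem dist_add_dist_point_zero (h : p ≠ q) (a b : ℝ) :
    dist (point p a) (point p 0) + dist (point p 0) (point q b) =
      dist (point p a) (point q b) := by
  rw [dist_point_same, dist_zero_right, Real.norm_eq_abs, dist_point_zero, dist_point_of_ne h,
    add_assoc]

theorem metricallySeparates_point_zero (h : p ≠ q) (a b : ℝ) :
    MetricallySeparates (point p 0) (point p a) (point q b) := by
  intro z
  obtain ⟨s, c, rfl⟩ := exists_eq_point z
  rcases eq_or_ne p s with rfl | hs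
  · exact Or.inr (dist_add_dist_point_zero h c b)
  · exact Or.inl (dist_add_dist_point_zero hs a c)

theorem hasUniqueDivision (x y : RiverPlane) : HasUniqueDivision x y := by
  obtain ⟨p, a, rfl⟩ := exists_eq_point x
  obtain ⟨q, b, rfl⟩ := exists_eq_point y
  rcases eq_or_ne p q with rfl | h
  · exact hasUniqueDivision_point_same p a b
  · have hriver : HasUniqueDivision (point p 0) (point q b) :=
      (hasUniqueDivision_point_zero p q).trans (hasUniqueDivision_point_same q 0 b)
        (metricallySeparates_point_zero h.symm b 0).symm
    exact (hasUniqueDivision_point_same p a 0).trans hriver (metricallySeparates_point_zero h a b)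

end RiverPlane

/-- (ℝ², d*) is an M-space. -/
theorem river_M_space :
    ∀ x y : ℝ × ℝ, ∀ r : ℝ, 0 ≤ r → r ≤ riverDist x y →
      ∃! z : ℝ × ℝ, riverDist x z = r ∧ riverDist z y = riverDist x y - r :=
  RiverPlane.hasUniqueDivision
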